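/- Let a > 0 and let ρ : [0,a] → ℝ be continuously differentiable with ρ(t) > 0 for all t ∈ [0,a]. Then there exist constants C > 0 and h₀ ∈ (0,a] such that for all h ∈ (0,h₀], | (∫₀^h t ρ(t) dt) / (∫₀^h ρ(t) dt) − h/2 | ≤ C h². -/

import Mathlib

/-!
Centre the first moment at the left endpoint and subtract the constant `c = ρ(a+)`, whose mean is
exactly the midpoint. The remainder `ρ - c` is `O(t - a)`, so it changes the first moment about the
midpoint by `O((h - a)³)`, whereas the mass is equivalent to `c (h - a)`. The quotient is
`O((h - a)²)`.
-/

open Asymptotics Filter MeasureTheory Set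
open scoped Topology

section Asymptotic

variable {E F : Type*} [NormedAddCommGroup E] [NormedAddCommGroup F] {a : ℝ}

theorem exists_pos_forall_Ioc_norm_le_of_isBigO_nhdsGT {b : ℝ} {f : ℝ → E} {g : ℝ → F}
    (hab : a < b) (hfg : f =O[𝓝[>] a] g) :
    ∃ C > 0, ∃ b₀ ∈ Ioc a b, ∀ t ∈ Ioc a b₀, ‖f t‖ ≤ C * ‖g t‖ := by
  obtain ⟨C, hC, hbound⟩ := hfg.exists_pos
  obtain ⟨u, hu, hsub⟩ := mem_nhdsGT_iff_exists_Ioc_subset.mp hbound.bound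
  exact ⟨C, hC, min u b, ⟨lt_min hu hab, min_le_right u b⟩,
    fun t ht ↦ hsub ⟨ht.1, ht.2.trans (min_le_left u b)⟩⟩

theorem tendsto_nhdsGT_of_isBigO_sub {f : ℝ → E} {c : E}
    (hfc : (fun t ↦ f t - c) =O[𝓝[>] a] fun t ↦ t - a) : Tendsto f (𝓝[>] a) (𝓝 c) :=
  tendsto_sub_nhds_zero_iff.mp <| hfc.trans_tendsto <|
    (tendsto_sub_nhds_zero_iff.mpr tendsto_id).mono_left nhdsWithin_le_nhds

variable [NormedSpace ℝ E]

theorem isBigO_sub_nhdsGT_of_differentiableWithinAt_Icc {b : ℝ} {f : ℝ → E} (hab : a < b)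
    (hf : DifferentiableWithinAt ℝ f (Icc a b) a) :
    (fun t ↦ f t - f a) =O[𝓝[>] a] fun t ↦ t - a :=
  hf.isBigO_sub.mono (nhdsWithin_le_of_mem (Icc_mem_nhdsGT hab))

theorem isBigO_intervalIntegral_sub_pow {f : ℝ → E} {n : ℕ}
    (hf : f =O[𝓝[>] a] fun t ↦ (t - a) ^ n) :
    (fun h ↦ ∫ t in a..h, f t) =O[𝓝[>] a] fun h ↦ (h - a) ^ (n + 1) := by
  obtain ⟨C, hC, b, hb, hbound⟩ :=
    exists_pos_forall_Ioc_norm_le_of_isBigO_nhdsGT (lt_add_one a) hf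
  refine .of_bound C ?_
  filter_upwards [Ioc_mem_nhdsGT hb.1] with h hh
  have hpointwise : ∀ t ∈ uIoc a h, ‖f t‖ ≤ C * (h - a) ^ n := by
    rw [uIoc_of_le hh.1.le]
    intro t ht
    have hta : 0 ≤ t - a := sub_nonneg.mpr ht.1.le
    calc
      ‖f t‖ ≤ C * ‖(t - a) ^ n‖ := hbound t ⟨ht.1, ht.2.trans hh.2⟩
      _ = C * (t - a) ^ n := by rw [Real.norm_of_nonneg (pow_nonneg hta n)]
      _ ≤ C * (h - a) ^ n := by gcongr; exact ht.2
  have hha : 0 ≤ h - a := sub_nonneg.mpr hh.1.le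
  calc
    ‖∫ t in a..h, f t‖ ≤ C * (h - a) ^ n * |h - a| :=
      intervalIntegral.norm_integral_le_of_norm_le_const hpointwise
    _ = C * ‖(h - a) ^ (n + 1)‖ := by
      rw [Real.norm_of_nonneg (pow_nonneg hha _), abs_of_nonneg hha, pow_succ, mul_assoc]

end Asymptotic

section Moments

variable {E : Type*} [NormedAddCommGroup E] [NormedSpace ℝ E] [CompleteSpace E]
  {a b : ℝ} {f : ℝ → E}

theorem integral_sub_smul_sub_const (hf : IntervalIntegrable f volume a b) (c : E) :
    ∫ t in a..b, (t - a) • (f t - c) =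
      (∫ t in a..b, t • f t) - a • (∫ t in a..b, f t) - ((b - a) ^ 2 / 2) • c := by
  have hscaled : IntervalIntegrable (fun t ↦ a • f t) volume a b := hf.smul a
  have hmoment : IntervalIntegrable (fun t ↦ t • f t) volume a b :=
    hf.continuousOn_smul continuousOn_id
  have hconst : IntervalIntegrable (fun t ↦ (t - a) • c) volume a b :=
    Continuous.intervalIntegrable (by fun_prop) a b
  have hlinear : ∫ t in a..b, (t - a) = (b - a) ^ 2 / 2 := by
    simp [intervalIntegral.integral_comp_sub_right (fun t ↦ t)]
  calc
    ∫ t in a..b, (t - a) • (f t - c) = ∫ t in a..b, (t • f t - a • f t - (t - a) • c) := by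
      simp only [smul_sub, sub_smul]
    _ = (∫ t in a..b, t • f t) - a • (∫ t in a..b, f t) - ((b - a) ^ 2 / 2) • c := by
      rw [intervalIntegral.integral_sub (hmoment.sub hscaled) hconst,
        intervalIntegral.integral_sub hmoment hscaled, intervalIntegral.integral_smul,
        intervalIntegral.integral_smul_const, hlinear]

theorem integral_smul_sub_midpoint_smul_integral (hf : IntervalIntegrable f volume a b) (c : E) :
    (∫ t in a..b, t • f t) - ((a + b) / 2) • (∫ t in a..b, f t) =
      (∫ t in a..b, (t - a) • (f t - c)) - ((b - a) / 2) • ∫ t in a..b, (f t - c) := by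
  rw [integral_sub_smul_sub_const hf, intervalIntegral.integral_sub hf intervalIntegrable_const,
    intervalIntegral.integral_const]
  module

theorem isBigO_integral_smul_sub_midpoint_smul_integral {c : E}
    (hfm : StronglyMeasurableAtFilter f (𝓝[>] a))
    (hfc : (fun t ↦ f t - c) =O[𝓝[>] a] fun t ↦ t - a) :
    (fun h ↦ (∫ t in a..h, t • f t) - ((a + h) / 2) • ∫ t in a..h, f t)
      =O[𝓝[>] a] fun h ↦ (h - a) ^ 3 := by
  have hmoment : (fun h ↦ ∫ t in a..h, (t - a) • (f t - c)) =O[𝓝[>] a] fun h ↦ (h - a) ^ 3 :=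
    isBigO_intervalIntegral_sub_pow <| by
      simpa only [smul_eq_mul, ← sq] using (isBigO_refl (fun t ↦ t - a) (𝓝[>] a)).smul hfc
  have hmass : (fun h ↦ ∫ t in a..h, (f t - c)) =O[𝓝[>] a] fun h ↦ (h - a) ^ 2 :=
    isBigO_intervalIntegral_sub_pow <| by simpa only [pow_one] using hfc
  have hhalf : (fun h ↦ (h - a) / 2) =O[𝓝[>] a] fun h ↦ h - a := by
    simpa only [div_eq_inv_mul] using isBigO_const_mul_self 2⁻¹ (fun h ↦ h - a) (𝓝[>] a)
  have hweighted : (fun h ↦ ((h - a) / 2) • ∫ t in a..h, (f t - c))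
      =O[𝓝[>] a] fun h ↦ (h - a) ^ 3 := by
    simpa only [smul_eq_mul, ← pow_succ'] using hhalf.smul hmass
  have hint : ∀ᶠ h in 𝓝[>] a, IntervalIntegrable f volume a h :=
    (tendsto_nhdsGT_of_isBigO_sub hfc).eventually_intervalIntegrable (l := 𝓝[≥] a) hfm
      (volume.finiteAt_nhdsWithin a (Ioi a)) (tendsto_const_nhdsWithin self_mem_Ici)
      (tendsto_id'.mpr (nhdsWithin_mono a Ioi_subset_Ici_self))
  refine (hmoment.sub hweighted).congr' ?_ .rfl
  filter_upwards [hint] with h hh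
  exact (integral_smul_sub_midpoint_smul_integral hh c).symm

theorem isEquivalent_intervalIntegral_sub_smul_const {c : E}
    (hfm : StronglyMeasurableAtFilter f (𝓝[>] a)) (hf : Tendsto f (𝓝[>] a) (𝓝 c)) (hc : c ≠ 0) :
    IsEquivalent (𝓝[>] a) (fun h ↦ ∫ t in a..h, f t) fun h ↦ (h - a) • c := by
  have hremainder :
      (fun h ↦ (∫ t in a..h, f t) - (h - a) • c) =o[𝓝[>] a] fun h ↦ h - a :=
    intervalIntegral.integral_sub_linear_isLittleO_of_tendsto_ae (a := a) (l := 𝓝[≥] a) hfm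
      (hf.mono_left inf_le_left) (tendsto_const_nhdsWithin self_mem_Ici)
      (tendsto_id'.mpr (nhdsWithin_mono a Ioi_subset_Ici_self))
  have hlinear : (fun h ↦ h - a) =O[𝓝[>] a] fun h ↦ (h - a) • c := by
    simpa only [smul_eq_mul, mul_one] using
      (isBigO_refl (fun h ↦ h - a) (𝓝[>] a)).smul (isBigO_const_const (1 : ℝ) hc (𝓝[>] a))
  exact hremainder.trans_isBigO hlinear

end Moments

theorem isBigO_mean_sub_midpoint {a c : ℝ} {ρ : ℝ → ℝ}
    (hρm : StronglyMeasurableAtFilter ρ (𝓝[>] a))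
    (hρc : (fun t ↦ ρ t - c) =O[𝓝[>] a] fun t ↦ t - a) (hc : c ≠ 0) :
    (fun h ↦ (∫ t in a..h, t * ρ t) / (∫ t in a..h, ρ t) - (a + h) / 2)
      =O[𝓝[>] a] fun h ↦ (h - a) ^ 2 := by
  have hmass : IsEquivalent (𝓝[>] a) (fun h ↦ ∫ t in a..h, ρ t) fun h ↦ (h - a) • c :=
    isEquivalent_intervalIntegral_sub_smul_const hρm (tendsto_nhdsGT_of_isBigO_sub hρc) hc
  have hpos : ∀ᶠ h in 𝓝[>] a, 0 < h - a := by
    filter_upwards [self_mem_nhdsWithin] with h hh using sub_pos.mpr hh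
  have hlinear : (fun h ↦ h - a) =O[𝓝[>] a] fun h ↦ ∫ t in a..h, ρ t :=
    IsBigO.trans (by simpa only [smul_eq_mul, mul_comm] using isBigO_self_const_mul hc _ _)
      hmass.isBigO_symm
  have hinv : (fun h ↦ (∫ t in a..h, ρ t)⁻¹) =O[𝓝[>] a] fun h ↦ (h - a)⁻¹ :=
    hlinear.inv_rev (hpos.mono fun _ hh hzero ↦ absurd hzero hh.ne')
  have hcentred := isBigO_integral_smul_sub_midpoint_smul_integral hρm hρc
  refine (hcentred.mul hinv).congr' ?_ ?_
  · filter_upwards [hpos, hlinear.eq_zero_imp] with h hh hzero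
    have hmass_ne : ∫ t in a..h, ρ t ≠ 0 := fun hm ↦ hh.ne' (hzero hm)
    simp only [smul_eq_mul]
    field_simp
  · filter_upwards [hpos] with h hh
    field_simp

theorem stmt16_general {a b c : ℝ} (hab : a < b) {ρ : ℝ → ℝ}
    (hρm : StronglyMeasurableAtFilter ρ (𝓝[>] a))
    (hρc : (fun t ↦ ρ t - c) =O[𝓝[>] a] fun t ↦ t - a) (hc : c ≠ 0) :
    ∃ C > (0 : ℝ), ∃ b₀ ∈ Ioc a b, ∀ h ∈ Ioc a b₀,
      |(∫ t in a..h, t * ρ t) / (∫ t in a..h, ρ t) - (a + h) / 2| ≤ C * (h - a) ^ 2 := by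
  simpa only [norm_pow, Real.norm_eq_abs, sq_abs] using
    exists_pos_forall_Ioc_norm_le_of_isBigO_nhdsGT hab (isBigO_mean_sub_midpoint hρm hρc hc)

/-- If `ρ` is continuously differentiable and strictly positive on `[0,a]`, then the
normalized mean `(∫₀^h t ρ(t) dt) / (∫₀^h ρ(t) dt)` equals `h/2 + O(h²)`:
there are `C > 0` and `h₀ ∈ (0,a]` such that for all `h ∈ (0,h₀]` the difference from
`h/2` is at most `C h²`. -/
theorem stmt16 (a : ℝ) (ha : 0 < a) (ρ : ℝ → ℝ)
    (hρ : ContDiffOn ℝ 1 ρ (Set.Icc 0 a))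
    (hpos : ∀ t ∈ Set.Icc (0 : ℝ) a, 0 < ρ t) :
    ∃ C > (0 : ℝ), ∃ h₀ ∈ Set.Ioc (0 : ℝ) a, ∀ h ∈ Set.Ioc (0 : ℝ) h₀,
      |(∫ t in (0 : ℝ)..h, t * ρ t) / (∫ t in (0 : ℝ)..h, ρ t) - h / 2| ≤ C * h ^ 2 := by
  simpa only [zero_add, sub_zero] using
    stmt16_general ha
      ⟨Icc 0 a, Icc_mem_nhdsGT ha, hρ.continuousOn.aestronglyMeasurable measurableSet_Icc⟩
      (isBigO_sub_nhdsGT_of_differentiableWithinAt_Icc ha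
        (hρ.differentiableOn one_ne_zero 0 (left_mem_Icc.mpr ha.le)))
      (hpos 0 (left_mem_Icc.mpr ha.le)).ne'
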